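/- arXiv:2501.18843 — 4 statements merged into one kernel-verified Lean document; each statement's English description precedes it below -/
import Mathlib

section
/- Let T > 0 and d > 0 be reals, and let f : ℝ → Bool be the clock signal with period T and high time x, i.e. f(t) = true iff t − T·⌊t/T⌋ ∈ [0, x). If d < x and x ≤ T − d, then the signal g defined by g(t) = ¬(f(t) ∧ ¬f(t − d)) (the NAND of f with the inverted d-delayed copy of f) is periodic with period T and is false exactly on the interval [0, d) modulo T, i.e. g(t) = false iff t − T·⌊t/T⌋ ∈ [0, d). -/
/-!
Write `r` for the residue of `t` modulo `T`. If `d ≤ r`, then `t - d` has residue `r - d`, which is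
below `x` as soon as `r` is: the delayed clock is still high whenever the clock is. If `r < d`, then
`t - d` lies in the previous period and has residue `r - d + T ≥ T - d ≥ x`: the delayed clock is
low. Hence the clock is high and its delayed copy low exactly when `r < d` and `r < x`.
-/

open Set

section Residue

variable {G : Type*} [AddCommGroup G] [LinearOrder G] [IsOrderedAddMonoid G] [Archimedean G]
  {p : G} (hp : 0 < p) {a d t : G}

theorem toIcoMod_sub_eq_sub_of_add_le (hd : 0 ≤ d) (h : a + d ≤ toIcoMod hp a t) :
    toIcoMod hp a (t - d) = toIcoMod hp a t - d := by
  have hlt : toIcoMod hp a t - d < a + p :=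
    (sub_le_self _ hd).trans_lt (toIcoMod_lt_right hp a t)
  refine (toIcoMod_eq_iff hp).2 ⟨⟨le_sub_iff_add_le.2 h, hlt⟩, toIcoDiv hp a t, ?_⟩
  rw [sub_add_eq_add_sub, toIcoMod_add_toIcoDiv_zsmul]

theorem toIcoMod_sub_eq_sub_add_of_lt_add (hdp : d ≤ p) (h : toIcoMod hp a t < a + d) :
    toIcoMod hp a (t - d) = toIcoMod hp a t - d + p := by
  have hle : a ≤ toIcoMod hp a t - d + p := by
    rw [sub_add_eq_add_sub, add_sub_assoc]
    exact le_add_of_le_of_nonneg (left_le_toIcoMod hp a t) (sub_nonneg.2 hdp)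
  have hlt : toIcoMod hp a t - d + p < a + p := by gcongr; exact sub_lt_iff_lt_add.2 h
  refine (toIcoMod_eq_iff hp).2 ⟨⟨hle, hlt⟩, toIcoDiv hp a t - 1, ?_⟩
  nth_rw 1 [← toIcoMod_add_toIcoDiv_zsmul hp a t, sub_one_zsmul]
  abel

end Residue

theorem sub_mul_floor_div_eq_toIcoMod {K : Type*} [Field K] [LinearOrder K] [IsStrictOrderedRing K]
    [FloorRing K] {p : K} (hp : 0 < p) (t : K) : t - p * ⌊t / p⌋ = toIcoMod hp 0 t := by
  rw [← self_sub_toIcoDiv_mul, toIcoDiv_eq_floor, sub_zero, mul_comm]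

section Clock

variable {G : Type*} [AddCommGroup G] [LinearOrder G] [IsOrderedAddMonoid G] [Archimedean G]
  {T d x : G} {hT : 0 < T} {f : G → Bool}

/-- `f` is the clock of period `T` and high time `x`, with a rising edge at time `0`. The high time
is not restricted to `(0, T)`: the clock is constantly low for `x ≤ 0` and constantly high for
`T ≤ x`. -/
def IsClock (hT : 0 < T) (x : G) (f : G → Bool) : Prop :=
  ∀ t, f t = true ↔ toIcoMod hT 0 t ∈ Ico 0 x

theorem isClock_iff_lt : IsClock hT x f ↔ ∀ t, f t = true ↔ toIcoMod hT 0 t < x := by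
  simp only [IsClock, mem_Ico, left_le_toIcoMod, true_and]

theorem IsClock.periodic (hf : IsClock hT x f) : Function.Periodic f T := fun t =>
  Bool.eq_iff_iff.2 <| by rw [hf, hf, toIcoMod_add_right]

theorem IsClock.and_not_delay (hf : IsClock hT x f) (hd : 0 ≤ d) (hxTd : x ≤ T - d) :
    IsClock hT (min d x) fun t => f t && !f (t - d) := by
  rw [isClock_iff_lt] at hf ⊢
  intro t
  rw [Bool.and_eq_true, Bool.not_eq_true', ← Bool.not_eq_true, hf, hf, lt_min_iff,
    and_comm (a := toIcoMod hT 0 t < d)]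
  refine and_congr_right fun hrx => ?_
  have hr : 0 ≤ toIcoMod hT 0 t := left_le_toIcoMod hT 0 t
  rcases lt_or_ge (toIcoMod hT 0 t) d with hrd | hdr
  · have hdT : d ≤ T := sub_nonneg.1 (hr.trans (hrx.le.trans hxTd))
    have hx : x ≤ toIcoMod hT 0 t - d + T := by
      rw [sub_add_eq_add_sub, add_sub_assoc]
      exact hxTd.trans (le_add_of_nonneg_left hr)
    rw [toIcoMod_sub_eq_sub_add_of_lt_add hT hdT (by rwa [zero_add])]
    exact iff_of_true hx.not_gt hrd
  · rw [toIcoMod_sub_eq_sub_of_add_le hT hd (by rwa [zero_add])]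
    exact iff_of_false (not_not.2 ((sub_le_self _ hd).trans_lt hrx)) hdr.not_gt

theorem pulse_shaper_stage1_general (hf : IsClock hT x f) (hd : 0 ≤ d) (hxTd : x ≤ T - d)
    {g : G → Bool} (hg : ∀ t, g t = !(f t && !f (t - d))) :
    Function.Periodic g T ∧ ∀ t, g t = false ↔ toIcoMod hT 0 t ∈ Ico 0 (min d x) := by
  have hpulse := hf.and_not_delay hd hxTd
  refine ⟨fun t => ?_, fun t => ?_⟩
  · rw [hg, hg]
    exact congrArg not (hpulse.periodic t)
  · rw [hg, Bool.not_eq_false']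
    exact hpulse t

end Clock

/-- first pulse-shaper stage. `f` is the clock of period `T` and
high time `x`; `g = NAND(f, inverted d-delayed f)` is periodic with period `T`
and low exactly on `[0, d)` modulo `T`. -/
theorem pulse_shaper_stage1
    (T d x : ℝ) (hT : 0 < T) (hd : 0 < d) (hx : 0 < x) (hxT : x < T)
    (hdx : d < x) (hxTd : x ≤ T - d)
    (f : ℝ → Bool)
    (hf : ∀ t : ℝ, f t = true ↔ t - T * (⌊t / T⌋ : ℝ) ∈ Set.Ico (0 : ℝ) x)
    (g : ℝ → Bool)
    (hg : ∀ t : ℝ, g t = !(f t && !(f (t - d)))) :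
    (∀ t : ℝ, g (t + T) = g t) ∧
    (∀ t : ℝ, g t = false ↔ t - T * (⌊t / T⌋ : ℝ) ∈ Set.Ico (0 : ℝ) d) := by
  simp only [sub_mul_floor_div_eq_toIcoMod hT] at hf ⊢
  simpa only [min_eq_left hdx.le, Function.Periodic] using
    pulse_shaper_stage1_general hf hd.le hxTd hg
end

section
/- Let T > 0 and x be reals with 2T/3 < x ≤ 5T/6, and let f : ℝ → Bool be the clock signal with period T and high time x, i.e. f(t) = true iff t − T·⌊t/T⌋ ∈ [0, x). Define g(t) = ¬(f(t) ∧ ¬f(t − T/3)) and out(t) = ¬(g(t) ∧ g(t − T/6)). Then out is periodic with period T and is true exactly on [x − 2T/3, T/2) modulo T. In particular, the output pulse starts x − 2T/3 > 0 time units after the input pulse and has high time 7T/6 − x < T/2 instead of the intended high time T/2. -/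
/-!
An input pulse longer than `2T/3` is so long that its `T/3`-delayed copy is low only while the
pulse itself is high. The first stage therefore degenerates to a pure delay, `g t = f (t - T / 3)`,
and `out` is high exactly when at least one of the copies of `f` delayed by `T / 3` and `T / 2` is
low. Modulo `T` these low phases are `[x - 2T/3, T/3)` and `[x - T/2, T/2)`; they overlap or abut
because `x ≤ 5T/6`.
-/

open Set

/-- The signal `s` is high exactly on the half-open interval `[a, b)` modulo the period `T`. The
endpoints may lie in any period, so that a delay translates them without wrapping around. -/
def IsPulseTrain {α : Type*} [AddCommGroup α] [Preorder α] (s : α → Bool) (T a b : α) : Prop :=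
  ∀ t, s t = true ↔ ∃ n : ℤ, t - n • T ∈ Ico a b

namespace IsPulseTrain

variable {α : Type*} [AddCommGroup α] {s r : α → Bool} {T a b c d e : α}

section Preorder

variable [Preorder α]

lemma periodic (hs : IsPulseTrain s T a b) : Function.Periodic s T := by
  intro t
  rw [Bool.eq_iff_iff, hs, hs, ← (Equiv.addRight (1 : ℤ)).exists_congr_right]
  simp only [Equiv.coe_addRight, add_zsmul, one_zsmul, add_sub_add_right_eq_sub]

lemma le_of_Ico_subset (hs : IsPulseTrain s T a b) (hr : IsPulseTrain r T c d)
    (h : Ico a b ⊆ Ico c d) : s ≤ r := by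
  intro t hst
  obtain ⟨n, hn⟩ := (hs t).1 hst
  exact (hr t).2 ⟨n, h hn⟩

end Preorder

section PartialOrder

variable [PartialOrder α] [IsOrderedAddMonoid α]

lemma delay (hs : IsPulseTrain s T a b) (e : α) :
    IsPulseTrain (fun t ↦ s (t - e)) T (a + e) (b + e) := by
  intro t
  simp only [hs (t - e), sub_right_comm t e, sub_mem_Ico_iff_left]

lemma sub_period (hs : IsPulseTrain s T a b) : IsPulseTrain s T (a - T) (b - T) := by
  simpa only [sub_neg_eq_add, hs.periodic _, ← sub_eq_add_neg] using hs.delay (-T)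

end PartialOrder

section LinearOrder

variable [LinearOrder α]

lemma or (hs : IsPulseTrain s T a b) (hr : IsPulseTrain r T c d) (hcb : c ≤ b) (had : a ≤ d) :
    IsPulseTrain (fun t ↦ s t || r t) T (min a c) (max b d) := by
  intro t
  simp only [Bool.or_eq_true, hs t, hr t, ← exists_or, ← mem_union, Ico_union_Ico' hcb had]

variable [IsOrderedAddMonoid α] [Archimedean α]

lemma not (hs : IsPulseTrain s T a b) (hT : 0 < T) :
    IsPulseTrain (fun t ↦ !s t) T b (a + T) := by
  intro t
  rw [Bool.not_eq_true', ← Bool.not_eq_true, hs]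
  constructor
  · intro hlow
    have hmem := sub_toIcoDiv_zsmul_mem_Ico hT a t
    exact ⟨toIcoDiv hT a t, not_lt.1 fun hb ↦ hlow ⟨_, hmem.1, hb⟩, hmem.2⟩
  · rintro ⟨m, hbm, hma⟩ ⟨n, han, hnb⟩
    have hm : toIcoDiv hT a t = m :=
      toIcoDiv_eq_of_sub_zsmul_mem_Ico hT ⟨(han.trans_lt hnb).le.trans hbm, hma⟩
    have hn : toIcoDiv hT a t = n :=
      toIcoDiv_eq_of_sub_zsmul_mem_Ico hT ⟨han, hnb.trans (hbm.trans_lt hma)⟩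
    rw [← hm, hn] at hbm
    exact hbm.not_gt hnb

lemma nand_not_delay_eq_delay (hs : IsPulseTrain s T a b) (hT : 0 < T) (hTe : a + T ≤ b + e)
    (he : a + e ≤ b) :
    (fun t ↦ !(s t && !s (t - e))) = fun t ↦ s (t - e) := by
  have hlow : IsPulseTrain (fun t ↦ !s (t - e)) T (b + e - T) (a + e) := by
    simpa only [add_sub_cancel_right] using ((hs.delay e).not hT).sub_period
  have hle : (fun t ↦ !s (t - e)) ≤ s :=
    hlow.le_of_Ico_subset hs (Ico_subset_Ico (le_sub_iff_add_le.2 hTe) he)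
  have hand : s ⊓ (fun t ↦ !s (t - e)) = fun t ↦ !s (t - e) := inf_eq_right.2 hle
  funext t
  exact (congrArg Bool.not (congrFun hand t)).trans (Bool.not_not _)

lemma nand_delay (hs : IsPulseTrain s T a b) (hT : 0 < T) (he : 0 ≤ e) (hbe : b + e ≤ a + T) :
    IsPulseTrain (fun t ↦ !(s t && s (t - e))) T b (a + T + e) := by
  have hlow := hs.not hT
  have hTe : a + T ≤ a + T + e := le_add_of_nonneg_right he
  have hb : b ≤ b + e := le_add_of_nonneg_right he
  simpa only [Bool.not_and, min_eq_left hb, max_eq_right hTe] using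
    hlow.or (hlow.delay e) hbe (hb.trans (hbe.trans hTe))

end LinearOrder

end IsPulseTrain

lemma isPulseTrain_iff_sub_mul_floor_mem_Ico {K : Type*} [Field K] [LinearOrder K]
    [IsStrictOrderedRing K] [FloorRing K] {s : K → Bool} {T a b : K} (hT : 0 < T)
    (ha : 0 ≤ a) (hb : b ≤ T) :
    IsPulseTrain s T a b ↔ ∀ t, s t = true ↔ t - T * (⌊t / T⌋ : K) ∈ Ico a b := by
  refine forall_congr' fun t ↦ iff_congr Iff.rfl ⟨?_, fun hmem ↦ ⟨⌊t / T⌋, ?_⟩⟩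
  · rintro ⟨n, hn⟩
    have hfloor : ⌊t / T⌋ = n := by
      rw [← sub_zero t, ← toIcoDiv_eq_floor hT, toIcoDiv_eq_iff]
      exact Ico_subset_Ico ha (hb.trans_eq (zero_add T).symm) hn
    rwa [hfloor, mul_comm, ← zsmul_eq_mul]
  · rwa [zsmul_eq_mul, mul_comm]

/-- flawed behavior of the two-stage pulse shaper when the input
high time satisfies `2T/3 < x ≤ 5T/6`: the output is periodic with period `T`
and high exactly on `[x - 2T/3, T/2)` modulo `T`; in particular the output
pulse starts `x - 2T/3 > 0` after the input pulse and has high time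
`7T/6 - x < T/2`. -/
theorem pulse_shaper_flaw_shifted_pulse
    (T x : ℝ) (hT : 0 < T) (hx1 : 2 * T / 3 < x) (hx2 : x ≤ 5 * T / 6)
    (f : ℝ → Bool)
    (hf : ∀ t : ℝ, f t = true ↔ t - T * (⌊t / T⌋ : ℝ) ∈ Set.Ico (0 : ℝ) x)
    (g out : ℝ → Bool)
    (hg : ∀ t : ℝ, g t = !(f t && !(f (t - T / 3))))
    (hout : ∀ t : ℝ, out t = !(g t && g (t - T / 6))) :
    (∀ t : ℝ, out (t + T) = out t) ∧
    (∀ t : ℝ, out t = true ↔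
      t - T * (⌊t / T⌋ : ℝ) ∈ Set.Ico (x - 2 * T / 3) (T / 2)) ∧
    0 < x - 2 * T / 3 ∧ 7 * T / 6 - x < T / 2 := by
  have hf_train : IsPulseTrain f T 0 x :=
    (isPulseTrain_iff_sub_mul_floor_mem_Ico hT le_rfl (by linarith)).2 hf
  have hg_delay : g = fun t ↦ f (t - T / 3) :=
    (funext hg).trans (hf_train.nand_not_delay_eq_delay hT (by linarith) (by linarith))
  have hg_train : IsPulseTrain g T (T / 3) (x + T / 3) := by
    simpa [hg_delay] using hf_train.delay (T / 3)
  have hout_train : IsPulseTrain out T (x - 2 * T / 3) (T / 2) := by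
    have hstart : x + T / 3 - T = x - 2 * T / 3 := by ring
    have hend : T / 3 + T + T / 6 - T = T / 2 := by ring
    rw [funext hout, ← hstart, ← hend]
    exact (hg_train.nand_delay hT (by linarith) (by linarith)).sub_period
  exact ⟨hout_train.periodic,
    (isPulseTrain_iff_sub_mul_floor_mem_Ico hT (by linarith) (by linarith)).1 hout_train,
    by linarith, by linarith⟩
end

section
/- Let T > 0 be real, and let f : ℝ → Bool be the clock signal with period T and high time 3T/4, i.e. f(t) = true iff t − T·⌊t/T⌋ ∈ [0, 3T/4). Define g(t) = ¬(f(t) ∧ ¬f(t − T/3)) and out(t) = ¬(g(t) ∧ g(t − T/6)). Then g is false exactly on [T/12, T/3) modulo T (a low interval of length T/4), and out is true exactly on [T/12, T/2) modulo T; in particular the output clock has high time 5T/12 rather than T/2, and its rising edge is delayed by T/12 relative to the input pulse. -/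
/-!
Modulo `T`, delaying a signal by `d` translates its high interval by `d`, and the complement of
`[a, b)` is `[b - T, a)`. For a clock of high time `x`, the copy delayed by `d` is therefore low on
`[x + d - T, d)`. If `x + d ≤ T`, this interval contains `[0, d)`, and `g` goes low with the rising
edge of the clock, as intended. If `x + d ≥ T`, the interval starts only at the phase `x + d - T`
and lies inside the high interval `[0, x)`, so the low pulse of `g` starts late by `x + d - T`. The
second NAND gate joins this pulse with its copy delayed by `e`, which moves only the right end.
-/

open Set

section PeriodicIco

variable {α : Type*} [AddCommGroup α] [LinearOrder α]

/-- The interval `[a, b)` modulo `T`, as the union of its translates by integer multiples of `T`.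
The endpoints need not lie in `[0, T)`, so that delays are translations without wrap-around. -/
def periodicIco (T a b : α) : Set α :=
  {t | ∃ n : ℤ, t - n • T ∈ Ico a b}

theorem periodicIco_subset_periodicIco {a b c d : α} (T : α) (hca : c ≤ a) (hbd : b ≤ d) :
    periodicIco T a b ⊆ periodicIco T c d :=
  fun _ ⟨n, hn⟩ => ⟨n, Ico_subset_Ico hca hbd hn⟩

theorem periodicIco_union_periodicIco {a b c d : α} (T : α) (hac : a ≤ c) (hcb : c ≤ b)
    (hbd : b ≤ d) : periodicIco T a b ∪ periodicIco T c d = periodicIco T a d := by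
  have hIco : Ico a d = Ico a b ∪ Ico c d := by
    rw [Ico_union_Ico' hcb (hac.trans (hcb.trans hbd)), min_eq_left hac, max_eq_right hbd]
  ext t
  simp only [periodicIco, hIco, mem_union, mem_ofPred_eq, exists_or]

variable [IsOrderedAddMonoid α]

theorem sub_mem_periodicIco_iff {T a b t d : α} :
    t - d ∈ periodicIco T a b ↔ t ∈ periodicIco T (a + d) (b + d) :=
  exists_congr fun n => by rw [sub_right_comm, sub_mem_Ico_iff_left]

variable [Archimedean α] {T : α}

theorem mem_periodicIco_iff_toIcoMod_mem (hT : 0 < T) {a b c : α} (hca : c ≤ a) (hbc : b ≤ c + T)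
    (t : α) : t ∈ periodicIco T a b ↔ toIcoMod hT c t ∈ Ico a b := by
  refine ⟨fun ⟨n, hn⟩ => ?_, fun h => ⟨toIcoDiv hT c t, h⟩⟩
  rwa [toIcoMod, toIcoDiv_eq_of_sub_zsmul_mem_Ico hT (Ico_subset_Ico hca hbc hn)]

theorem compl_periodicIco (hT : 0 < T) {a b : α} (hab : a ≤ b) (hba : b ≤ a + T) :
    (periodicIco T a b)ᶜ = periodicIco T (b - T) a := by
  ext t
  have hphase := toIcoMod_mem_Ico hT (b - T) t
  rw [sub_add_cancel] at hphase
  rw [mem_compl_iff,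
    mem_periodicIco_iff_toIcoMod_mem hT (sub_le_iff_le_add.2 hba) (sub_add_cancel b T).ge,
    mem_periodicIco_iff_toIcoMod_mem hT le_rfl (hab.trans (sub_add_cancel b T).ge)]
  simp only [mem_Ico, hphase.1, hphase.2, and_true, true_and, not_le]

end PeriodicIco

section Floor

variable {K : Type*} [Field K] [LinearOrder K] [IsStrictOrderedRing K] [FloorRing K] {T : K}

theorem toIcoMod_zero_eq_sub_mul_floor (hT : 0 < T) (t : K) :
    toIcoMod hT 0 t = t - T * (⌊t / T⌋ : K) := by
  rw [toIcoMod, toIcoDiv_eq_floor, sub_zero, zsmul_eq_mul, mul_comm]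

theorem sub_mul_floor_mem_Ico_iff (hT : 0 < T) {a b : K} (ha : 0 ≤ a) (hb : b ≤ T) (t : K) :
    t - T * (⌊t / T⌋ : K) ∈ Ico a b ↔ t ∈ periodicIco T a b := by
  rw [mem_periodicIco_iff_toIcoMod_mem hT ha (hb.trans_eq (zero_add T).symm),
    toIcoMod_zero_eq_sub_mul_floor]

end Floor

/-- The hypothesis `T ≤ x + d` is the violation of the design assumption: for `d = T / 3` it says
that the high time `x` is at least `2 * T / 3`. -/
theorem pulse_shaper_flaw_nominal_general {T x d e : ℝ} (hT : 0 < T) (hTxd : T ≤ x + d)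
    (hdx : d ≤ x) (he : 0 ≤ e) (hxe : x + e ≤ T) {f g out : ℝ → Bool}
    (hf : ∀ t, f t = true ↔ t - T * (⌊t / T⌋ : ℝ) ∈ Ico 0 x)
    (hg : ∀ t, g t = !(f t && !(f (t - d))))
    (hout : ∀ t, out t = !(g t && g (t - e))) :
    (∀ t, g t = false ↔ t - T * (⌊t / T⌋ : ℝ) ∈ Ico (x + d - T) d) ∧
    (∀ t, out t = true ↔ t - T * (⌊t / T⌋ : ℝ) ∈ Ico (x + d - T) (d + e)) := by
  have hf_iff (t : ℝ) : f t = true ↔ t ∈ periodicIco T 0 x := by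
    rw [hf, sub_mul_floor_mem_Ico_iff hT le_rfl (by linarith)]
  have hdelayed_low (t : ℝ) : f (t - d) = false ↔ t ∈ periodicIco T (x + d - T) d := by
    rw [← Bool.not_eq_true, hf_iff, sub_mem_periodicIco_iff, zero_add, ← mem_compl_iff,
      compl_periodicIco hT (by linarith) (by linarith)]
  have hg_iff (t : ℝ) : g t = false ↔ t ∈ periodicIco T (x + d - T) d := by
    have hgate : g t = false ↔ f t = true ∧ f (t - d) = false := by simp [hg]
    rw [hgate, hf_iff, hdelayed_low, ← mem_inter_iff,
      inter_eq_right.2 (periodicIco_subset_periodicIco T (by linarith) hdx)]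
  have hout_iff (t : ℝ) : out t = true ↔ t ∈ periodicIco T (x + d - T) (d + e) := by
    have hgate : out t = true ↔ g t = false ∨ g (t - e) = false := by simp [hout]
    rw [hgate, hg_iff, hg_iff, sub_mem_periodicIco_iff, ← mem_union,
      periodicIco_union_periodicIco T (by linarith) (by linarith) (by linarith)]
  constructor <;> intro t
  · rw [hg_iff, sub_mul_floor_mem_Ico_iff hT (by linarith) (by linarith)]
  · rw [hout_iff, sub_mul_floor_mem_Ico_iff hT (by linarith) (by linarith)]

/-- behavior of the old pulse shaper on the nominal input of the
delay element, a clock of high time `3T/4`: the intermediate signal `g` is low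
exactly on `[T/12, T/3)` modulo `T`, and the output is high exactly on
`[T/12, T/2)` modulo `T`, i.e. it has high time `5T/12` and its rising edge is
delayed by `T/12`. -/
theorem pulse_shaper_flaw_nominal
    (T : ℝ) (hT : 0 < T)
    (f : ℝ → Bool)
    (hf : ∀ t : ℝ, f t = true ↔
      t - T * (⌊t / T⌋ : ℝ) ∈ Set.Ico (0 : ℝ) (3 * T / 4))
    (g out : ℝ → Bool)
    (hg : ∀ t : ℝ, g t = !(f t && !(f (t - T / 3))))
    (hout : ∀ t : ℝ, out t = !(g t && g (t - T / 6))) :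
    (∀ t : ℝ, g t = false ↔
      t - T * (⌊t / T⌋ : ℝ) ∈ Set.Ico (T / 12) (T / 3)) ∧
    (∀ t : ℝ, out t = true ↔
      t - T * (⌊t / T⌋ : ℝ) ∈ Set.Ico (T / 12) (T / 2)) := by
  have hrise : 3 * T / 4 + T / 3 - T = T / 12 := by ring
  have hfall : T / 3 + T / 6 = T / 2 := by ring
  simpa only [hrise, hfall] using pulse_shaper_flaw_nominal_general hT (by linarith)
    (by linarith) (by linarith) (by linarith) hf hg hout
end

section
/- Let T > 0 and x be reals with 5T/6 < x < T, and let f : ℝ → Bool be the clock signal with period T and high time x, i.e. f(t) = true iff t − T·⌊t/T⌋ ∈ [0, x). Define g(t) = ¬(f(t) ∧ ¬f(t − T/3)) and out(t) = ¬(g(t) ∧ g(t − T/6)). Then out is periodic with period T and is true exactly on the union [x − 2T/3, T/3) ∪ [x − T/2, T/2) modulo T, where these two intervals are disjoint (since x − T/2 > T/3) and each has length T − x < T/6. In particular, the output is a glitchy clock with two high pulses per period, each shorter than T/6. -/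
/-!
Up to multiples of `T`, the first stage is low exactly while `f` is high and its delayed copy is
low. The delayed copy is low on `[x + T/3, 4T/3)`, that is on `[x - 2T/3, T/3)` one period earlier.
As `x > 2T/3`, this window starts after the rising edge of `f` at `0`, so its width is `T - x` and
not the `T/3` the design aims at. The second stage outputs this window and its copy delayed by
`T/6`, which fail to merge into one pulse as soon as `T - x < T/6`.
-/

open Set

section PartialOrder

variable {α : Type*} [AddCommGroup α] [PartialOrder α] {T a b c d t : α}

/-- The times at which a signal of period `T` with one high pulse `[a, b)` per period is high.
The pulse need not lie in `[0, T)`, so that delays simply shift `a` and `b`. -/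
def pulseTrain (T a b : α) : Set α :=
  {t | ∃ n : ℤ, t - n • T ∈ Ico a b}

theorem add_period_mem_pulseTrain_iff : t + T ∈ pulseTrain T a b ↔ t ∈ pulseTrain T a b :=
  (Equiv.subRight (1 : ℤ)).exists_congr fun n => by
    rw [Equiv.subRight_apply, sub_smul, one_smul, sub_sub_eq_add_sub]

theorem pulseTrain_subset_pulseTrain (hca : c ≤ a) (hbd : b ≤ d) :
    pulseTrain T a b ⊆ pulseTrain T c d :=
  fun _ ⟨n, hn⟩ => ⟨n, Ico_subset_Ico hca hbd hn⟩

variable [IsOrderedAddMonoid α]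

theorem sub_mem_pulseTrain_iff :
    t - d ∈ pulseTrain T a b ↔ t ∈ pulseTrain T (a + d) (b + d) :=
  exists_congr fun n => by rw [sub_right_comm, sub_mem_Ico_iff_left]

theorem pulseTrain_add_period : pulseTrain T (a + T) (b + T) = pulseTrain T a b := by
  ext t
  rw [← sub_mem_pulseTrain_iff, ← add_period_mem_pulseTrain_iff, sub_add_cancel]

end PartialOrder

section LinearOrder

variable {α : Type*} [AddCommGroup α] [LinearOrder α] [IsOrderedAddMonoid α] [Archimedean α]
  {T a b c d e t : α}

theorem mem_pulseTrain_iff_toIcoMod_mem (hT : 0 < T) (hca : c ≤ a) (hbc : b ≤ c + T) :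
    t ∈ pulseTrain T a b ↔ toIcoMod hT c t ∈ Ico a b := by
  constructor
  · rintro ⟨n, hn⟩
    have hmod : toIcoMod hT c t = t - n • T :=
      (toIcoMod_eq_iff hT).2 ⟨Ico_subset_Ico hca hbc hn, n, (sub_add_cancel _ _).symm⟩
    rwa [hmod]
  · exact fun h => ⟨toIcoDiv hT c t, h⟩

theorem compl_pulseTrain (hT : 0 < T) (hab : a ≤ b) (hba : b ≤ a + T) :
    (pulseTrain T a b)ᶜ = pulseTrain T b (a + T) := by
  ext t
  rw [mem_compl_iff, mem_pulseTrain_iff_toIcoMod_mem hT le_rfl hba,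
    mem_pulseTrain_iff_toIcoMod_mem hT hab le_rfl, mem_Ico, mem_Ico,
    and_iff_right (left_le_toIcoMod hT a t), and_iff_left (toIcoMod_lt_right hT a t), not_lt]

theorem pulseTrain_sdiff_delay (hT : 0 < T) (hba : b ≤ a + T)
    (hrise : a + T ≤ b + d) (hfall : a + d ≤ b) :
    pulseTrain T a b \ pulseTrain T (a + d) (b + d) = pulseTrain T (b + d - T) (a + d) := by
  have hab : a ≤ b := by grind
  have hcompl : (pulseTrain T (a + d) (b + d))ᶜ = pulseTrain T (b + d - T) (a + d) := by
    rw [compl_pulseTrain hT (by gcongr) (by rw [add_right_comm]; gcongr),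
      ← pulseTrain_add_period (a := b + d - T), sub_add_cancel]
  rw [sdiff_eq, hcompl, inter_eq_right]
  exact pulseTrain_subset_pulseTrain (le_sub_iff_add_le.2 hrise) hfall

theorem pulse_shaper_eq_true_iff (hT : 0 < T) (hba : b ≤ a + T) (hrise : a + T ≤ b + d)
    (hfall : a + d ≤ b) {f g out : α → Bool}
    (hf : ∀ t, f t = true ↔ t ∈ pulseTrain T a b)
    (hg : ∀ t, g t = !(f t && !(f (t - d)))) (hout : ∀ t, out t = !(g t && g (t - e))) (t : α) :
    out t = true ↔
      t ∈ pulseTrain T (b + d - T) (a + d) ∪ pulseTrain T (b + d - T + e) (a + d + e) := by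
  have hg_low (s : α) : g s = false ↔ s ∈ pulseTrain T (b + d - T) (a + d) := by
    rw [← pulseTrain_sdiff_delay hT hba hrise hfall, mem_sdiff, ← hf, ← sub_mem_pulseTrain_iff,
      ← hf, hg, Bool.not_eq_false', Bool.and_eq_true, Bool.not_eq_true', Bool.not_eq_true]
  rw [hout, Bool.not_eq_true', Bool.and_eq_false_iff, hg_low, hg_low, sub_mem_pulseTrain_iff,
    mem_union]

end LinearOrder

theorem mem_pulseTrain_iff_sub_mul_floor_mem {K : Type*} [Field K] [LinearOrder K]
    [IsStrictOrderedRing K] [FloorRing K] {T a b t : K} (hT : 0 < T) (ha : 0 ≤ a) (hb : b ≤ T) :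
    t ∈ pulseTrain T a b ↔ t - T * (⌊t / T⌋ : K) ∈ Ico a b := by
  have hphase : toIcoMod hT 0 t = t - T * (⌊t / T⌋ : K) := by
    rw [toIcoMod, toIcoDiv_eq_floor, sub_zero, zsmul_eq_mul, mul_comm]
  rw [mem_pulseTrain_iff_toIcoMod_mem hT ha (by rwa [zero_add]), hphase]

/-- glitchy behavior of the two-stage pulse shaper when the input
high time satisfies `5T/6 < x < T`: the output is periodic with period `T` and
high exactly on `[x - 2T/3, T/3) ∪ [x - T/2, T/2)` modulo `T`, where the two
intervals are disjoint (`x - T/2 > T/3`) and each has length `T - x < T/6`. -/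
theorem pulse_shaper_flaw_glitch
    (T x : ℝ) (hT : 0 < T) (hx1 : 5 * T / 6 < x) (hx2 : x < T)
    (f : ℝ → Bool)
    (hf : ∀ t : ℝ, f t = true ↔ t - T * (⌊t / T⌋ : ℝ) ∈ Set.Ico (0 : ℝ) x)
    (g out : ℝ → Bool)
    (hg : ∀ t : ℝ, g t = !(f t && !(f (t - T / 3))))
    (hout : ∀ t : ℝ, out t = !(g t && g (t - T / 6))) :
    (∀ t : ℝ, out (t + T) = out t) ∧
    (∀ t : ℝ, out t = true ↔
      t - T * (⌊t / T⌋ : ℝ) ∈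
        Set.Ico (x - 2 * T / 3) (T / 3) ∪ Set.Ico (x - T / 2) (T / 2)) ∧
    T / 3 < x - T / 2 ∧
    Disjoint (Set.Ico (x - 2 * T / 3) (T / 3)) (Set.Ico (x - T / 2) (T / 2)) ∧
    T / 3 - (x - 2 * T / 3) = T - x ∧ T / 2 - (x - T / 2) = T - x ∧
    T - x < T / 6 := by
  have hclock (t : ℝ) : f t = true ↔ t ∈ pulseTrain T 0 x :=
    (hf t).trans (mem_pulseTrain_iff_sub_mul_floor_mem hT le_rfl hx2.le).symm
  have hpulses (t : ℝ) : out t = true ↔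
      t ∈ pulseTrain T (x - 2 * T / 3) (T / 3) ∪ pulseTrain T (x - T / 2) (T / 2) := by
    convert pulse_shaper_eq_true_iff hT (by linarith) (by linarith) (by linarith)
      hclock hg hout t using 3 <;> congr 1 <;> ring
  have hgap : T / 3 < x - T / 2 := by linarith
  refine ⟨fun t => ?_, fun t => ?_, hgap, ?_, by ring, by ring, by linarith⟩
  · rw [Bool.eq_iff_iff, hpulses, hpulses, mem_union, mem_union, add_period_mem_pulseTrain_iff,
      add_period_mem_pulseTrain_iff]
  · rw [hpulses, mem_union, mem_union,
      mem_pulseTrain_iff_sub_mul_floor_mem hT (by linarith) (by linarith),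
      mem_pulseTrain_iff_sub_mul_floor_mem hT (by linarith) (by linarith)]
  · exact Ico_disjoint_Ico.2 ((min_le_left _ _).trans (hgap.le.trans (le_max_right _ _)))
end
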